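/- Let Γ be an infinite graph such that for all distinct vertices x, y both Γ(x) \ Γ(y) and Γ(y) \ Γ(x) are infinite. Then Γ is locally rigid. -/

import Mathlib

/-!
Call two vertices twins over a set if no third vertex of the set tells them apart. A nonprincipal
ultrafilter can be sampled one vertex after another so that the sampled vertices are homogeneous.
Sampling blocks of widely different sizes, we extend a finite set `F` by a layer `L` such that
vertices of `F ∪ L` with equal degree in `F ∪ L` are twins over `L`.

Let `V = U ∪ L₁ ∪ L₂`, with `L₁` a layer over `U` and `L₂` a layer over `U ∪ L₁`. If an automorphism
`f` sends `x` into `L₂`, then `x` and `f x` are twins over all of `V`: as `y` and `f y` have equal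
degree, they are twins over `L₂`, so `x ∼ y ↔ f x ∼ f y ↔ f x ∼ y`. Hence if no vertex of `L₂` is
a twin of a vertex `u` of `U`, then `f u ∈ U ∪ L₁`, and the same argument applied to `L₁` shows that
`u` and `f u` are twins over `L₁` and, when `f u ∈ L₁`, over `U`. Sampling `L₁` along ultrafilters
that separate the vertices of `U` excludes `f u ∈ U \ {u}`. Sampling `L₂` along ultrafilters `q`
with `Γ(u) ∈ q ↔ u ∼ a` and `Γ(a) ∈ q ↔ ¬ u ∼ a`, for `u` in `U` and `a` in `L₁` twins over `U`,
excludes `f u ∈ L₁`; orienting the separation by `u ∼ a` in this way also keeps the vertices of `L₂`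
from being twins of vertices of `U`.
-/

open Filter Finset

section Ultrafilter

variable {X ι : Type*}

theorem eventually_iff_eventually (p : Ultrafilter X) (P : X → Prop) :
    ∀ᶠ x in p, (P x ↔ ∀ᶠ y in p, P y) := by
  by_cases h : ∀ᶠ y in p, P y
  · filter_upwards [h] with x hx using iff_of_true hx h
  · filter_upwards [Ultrafilter.eventually_not.2 h] with x hx using iff_of_false hx h

theorem exists_ultrafilter_le_cofinite_of_infinite_sdiff {S T : Set X} (h : (S \ T).Infinite) :
    ∃ p : Ultrafilter X, (p : Filter X) ≤ cofinite ∧ S ∈ p ∧ T ∉ p := by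
  have := h.cofinite_inf_principal_neBot
  obtain ⟨p, hp⟩ := Ultrafilter.exists_le (cofinite ⊓ 𝓟 (S \ T))
  exact ⟨p, hp.trans inf_le_left,
    (Ultrafilter.sdiff_mem_iff p).1 (le_principal_iff.1 (hp.trans inf_le_right))⟩

theorem exists_seq_forall_lt_iff_eventually [Finite ι] {p : ι → Ultrafilter X}
    (hp : ∀ i, (p i : Filter X) ≤ cofinite) {A : ι → Set X} (hA : ∀ i, A i ∈ p i)
    (R : X → X → Prop) :
    ∃ s : ℕ → ι → X, (∀ n i, s n i ∈ A i) ∧ ∀ m n, m < n → ∀ i j, s m i ≠ s n j ∧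
      (R (s m i) (s n j) ↔ ∀ᶠ x in p i, ∀ᶠ y in p j, R x y) := by
  obtain ⟨s, hs, hlt⟩ := exists_seq_of_forall_finset_exists
    (fun a : ι → X ↦ ∀ i, a i ∈ A i ∧
      ∀ j, (∀ᶠ y in p j, R (a i) y) ↔ ∀ᶠ x in p i, ∀ᶠ y in p j, R x y)
    (fun a b ↦ ∀ i j, a i ≠ b j ∧ (R (a i) (b j) ↔ ∀ᶠ x in p i, ∀ᶠ y in p j, R x y)) <| by
    intro S hS
    have hnext (j : ι) : ∃ b, (b ∈ A j ∧
        ∀ k, (∀ᶠ y in p k, R b y) ↔ ∀ᶠ x in p j, ∀ᶠ y in p k, R x y) ∧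
        ∀ a ∈ S, ∀ i, a i ≠ b ∧ (R (a i) b ↔ ∀ᶠ y in p j, R (a i) y) := by
      have hfresh (x : X) : ∀ᶠ b in p j, x ≠ b := by
        filter_upwards [hp j (Set.finite_singleton x).compl_mem_cofinite] with b hb
        exact Ne.symm hb
      refine Eventually.exists (f := (p j : Filter X)) (.and (.and (hA j) ?_) ?_)
      · exact eventually_all.2 fun k ↦ eventually_iff_eventually _ _
      · exact (eventually_all_finset S).2 fun a _ ↦ eventually_all.2 fun i ↦
          (hfresh (a i)).and (eventually_iff_eventually _ _)
    choose b hb hSb using hnext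
    exact ⟨b, hb, fun a ha i j ↦
      ⟨(hSb j a ha i).1, (hSb j a ha i).2.trans ((hS a ha i).2 j)⟩⟩
  exact ⟨s, fun n i ↦ (hs n i).1, hlt⟩

theorem exists_homogeneous_blocks [Finite ι] (Γ : SimpleGraph X) {p : ι → Ultrafilter X}
    (hp : ∀ i, (p i : Filter X) ≤ cofinite) {A : ι → Set X} (hA : ∀ i, A i ∈ p i) (w : ι → ℕ) :
    ∃ (B : ι → Finset X) (E : ι → ι → Prop), (∀ i, #(B i) = w i) ∧ (∀ i, ↑(B i) ⊆ A i) ∧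
      Pairwise (Function.onFun Disjoint B) ∧
      ∀ i j, ∀ x ∈ B i, ∀ y ∈ B j, x ≠ y → (Γ.Adj x y ↔ E i j) := by
  classical
  obtain ⟨s, hsA, hs⟩ := exists_seq_forall_lt_iff_eventually hp hA Γ.Adj
  obtain ⟨e, he⟩ := Countable.exists_injective_nat ι
  obtain ⟨M, hM⟩ := Finite.exists_le w
  have hdiv {i n} (hn : n ∈ Ico (e i * M) (e i * M + w i)) : n / M = e i := by
    have := hM i
    rw [mem_Ico] at hn
    exact Nat.div_eq_of_lt_le hn.1 (by rw [Nat.add_mul]; omega)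
  have hinj {m n i j} (h : s m i = s n j) : m = n := by
    rcases lt_trichotomy m n with hlt | heq | hlt
    · exact absurd h (hs m n hlt i j).1
    · exact heq
    · exact absurd h.symm (hs n m hlt j i).1
  let E i j := ∀ᶠ x in p i, ∀ᶠ y in p j, Γ.Adj x y
  refine ⟨fun i ↦ (Ico (e i * M) (e i * M + w i)).image (s · i),
    fun i j ↦ if e i ≤ e j then E i j else E j i, fun i ↦ ?_, fun i ↦ ?_, fun i j hij ↦ ?_, ?_⟩
  · rw [card_image_of_injective _ fun m n h ↦ hinj h, Nat.card_Ico, Nat.add_sub_cancel_left]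
  · simp only [coe_image, Set.image_subset_iff]
    exact fun n _ ↦ hsA n i
  · simp only [Function.onFun, disjoint_left, mem_image]
    rintro _ ⟨m, hm, rfl⟩ ⟨n, hn, hmn⟩
    obtain rfl := hinj hmn
    exact hij (he ((hdiv hm).symm.trans (hdiv hn)))
  · simp only [mem_image]
    rintro i j _ ⟨m, hm, rfl⟩ _ ⟨n, hn, rfl⟩ hne
    -- Blocks are sampled one after another, so the limits are iterated in the order of the blocks.
    rcases lt_trichotomy m n with hlt | rfl | hlt
    · rw [if_pos (hdiv hm ▸ hdiv hn ▸ Nat.div_le_div_right hlt.le)]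
      exact (hs m n hlt i j).2
    · obtain rfl := he ((hdiv hm).symm.trans (hdiv hn))
      exact absurd rfl hne
    · have hle : e j ≤ e i := hdiv hm ▸ hdiv hn ▸ Nat.div_le_div_right hlt.le
      rw [Γ.adj_comm, (hs n m hlt j i).2]
      split_ifs with h
      · rw [he (hle.antisymm h)]
      · rfl

end Ultrafilter

section Layers

variable {X ι : Type*} {Γ : SimpleGraph X}

open Classical in
/-- The number of neighbours of `x` in the finite set `V`, where `x` need not belong to `V`. -/
noncomputable def degreeIn (Γ : SimpleGraph X) (V : Finset X) (x : X) : ℕ :=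
  #{z ∈ V | Γ.Adj x z}

/-- Two vertices are twins over `S` if no element of `S`, apart from the two vertices themselves, is
adjacent to exactly one of them. -/
def TwinsOn (Γ : SimpleGraph X) (S : Finset X) (x y : X) : Prop :=
  ∀ z ∈ S, z ≠ x → z ≠ y → (Γ.Adj x z ↔ Γ.Adj y z)

/-- A layer over `F` is a finite set `L` of new vertices such that the degree of a vertex of `F ∪ L`
in `F ∪ L` determines its neighbours in `L`, in the sense of `TwinsOn`. -/
structure IsLayer [DecidableEq X] (Γ : SimpleGraph X) (F L : Finset X) : Prop where
  disjoint : Disjoint F L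
  twinsOn ⦃x y : X⦄ : x ∈ F ∪ L → y ∈ F ∪ L →
    degreeIn Γ (F ∪ L) x = degreeIn Γ (F ∪ L) y → TwinsOn Γ L x y

theorem degreeIn_union [DecidableEq X] {F L : Finset X} (h : Disjoint F L) (x : X) :
    degreeIn Γ (F ∪ L) x = degreeIn Γ F x + degreeIn Γ L x := by
  classical
  rw [degreeIn, filter_union, card_union_of_disjoint (disjoint_filter_filter h)]
  rfl

theorem degreeIn_le_card (F : Finset X) (x : X) : degreeIn Γ F x ≤ #F := by
  classical
  exact card_filter_le _ _

theorem degreeIn_congr {L : Finset X} {x y : X} (h : ∀ z ∈ L, (Γ.Adj x z ↔ Γ.Adj y z)) :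
    degreeIn Γ L x = degreeIn Γ L y := by
  classical
  exact congrArg card (filter_congr h)

theorem degreeIn_biUnion_bounds [Fintype ι] [DecidableEq X] {B : ι → Finset X}
    (hB : Pairwise (Function.onFun Disjoint B)) {x : X} {a : Finset ι}
    (ha : ∀ i, ∀ z ∈ B i, z ≠ x → (Γ.Adj x z ↔ i ∈ a)) :
    degreeIn Γ (univ.biUnion B) x ≤ ∑ i ∈ a, #(B i) ∧
      ∑ i ∈ a, #(B i) ≤ degreeIn Γ (univ.biUnion B) x + 1 := by
  classical
  have hnbr : {z ∈ univ.biUnion B | Γ.Adj x z} = (a.biUnion B).erase x := by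
    ext z
    simp only [mem_filter, mem_biUnion, mem_univ, true_and, mem_erase]
    constructor
    · rintro ⟨⟨i, hi⟩, hxz⟩
      exact ⟨hxz.ne', i, (ha i z hi hxz.ne').1 hxz, hi⟩
    · rintro ⟨hzx, i, hia, hi⟩
      exact ⟨⟨i, hi⟩, (ha i z hi hzx).2 hia⟩
  rw [← card_biUnion fun i _ j _ hij ↦ hB hij, degreeIn, hnbr]
  exact ⟨card_erase_le, Nat.sub_le_iff_le_add.1 pred_card_le_card_erase⟩

-- The degree in `F ∪ L` gives the total size of the blocks adjacent to a vertex with an error of at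
-- most `#F + 1`, hence the factor `#F + 2`; the powers of two then identify the blocks.
theorem isLayer_biUnion [Fintype ι] [DecidableEq X] {F : Finset X} {B : ι → Finset X}
    (hF : ∀ i, Disjoint F (B i)) (hB : Pairwise (Function.onFun Disjoint B))
    {e : ι → ℕ} (he : Function.Injective e) (hcard : ∀ i, #(B i) = (#F + 2) * 2 ^ e i)
    (hhom : ∀ x ∈ F ∪ univ.biUnion B, ∃ a : Finset ι,
      ∀ i, ∀ z ∈ B i, z ≠ x → (Γ.Adj x z ↔ i ∈ a)) :
    IsLayer Γ F (univ.biUnion B) := by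
  have hdisj : Disjoint F (univ.biUnion B) := (disjoint_biUnion_right _ _ _).2 fun i _ ↦ hF i
  refine ⟨hdisj, fun x y hx hy hxy ↦ ?_⟩
  have hle {x y : X} {a b : Finset ι} (ha : ∀ i, ∀ z ∈ B i, z ≠ x → (Γ.Adj x z ↔ i ∈ a))
      (hb : ∀ i, ∀ z ∈ B i, z ≠ y → (Γ.Adj y z ↔ i ∈ b))
      (hxy : degreeIn Γ (F ∪ univ.biUnion B) x = degreeIn Γ (F ∪ univ.biUnion B) y) :
      ∑ i ∈ a, 2 ^ e i ≤ ∑ i ∈ b, 2 ^ e i := by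
    have hxa := (degreeIn_biUnion_bounds hB ha).2
    have hyb := (degreeIn_biUnion_bounds hB hb).1
    have hyF := degreeIn_le_card (Γ := Γ) F y
    rw [degreeIn_union hdisj, degreeIn_union hdisj] at hxy
    simp only [hcard, ← mul_sum] at hxa hyb
    refine Nat.lt_succ_iff.1 (Nat.lt_of_mul_lt_mul_left (a := #F + 2) ?_)
    rw [Nat.mul_succ]
    omega
  obtain ⟨a, ha⟩ := hhom x hx
  obtain ⟨b, hb⟩ := hhom y hy
  have hab : a = b := map_injective ⟨e, he⟩ <| Finset.geomSum_injective le_rfl <| by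
    simpa using (hle ha hb hxy).antisymm (hle hb ha hxy.symm)
  intro z hz hzx hzy
  obtain ⟨i, -, hi⟩ := mem_biUnion.1 hz
  rw [ha i z hi hzx, hb i z hi hzy, hab]

theorem exists_isLayer [Finite ι] [DecidableEq X] (Γ : SimpleGraph X) (F : Finset X)
    {p : ι → Ultrafilter X} (hp : ∀ i, (p i : Filter X) ≤ cofinite) :
    ∃ L, IsLayer Γ F L ∧
      (∀ z ∈ L, ∃ i, ∀ x ∈ F, (Γ.Adj x z ↔ Γ.neighborSet x ∈ p i)) ∧
      ∀ i, ∃ z ∈ L, ∀ x ∈ F, (Γ.Adj x z ↔ Γ.neighborSet x ∈ p i) := by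
  classical
  cases nonempty_fintype ι
  obtain ⟨e, he⟩ := Countable.exists_injective_nat ι
  obtain ⟨B, E, hcard, hBA, hdisj, hE⟩ := exists_homogeneous_blocks Γ hp
    (A := fun i ↦ {z | z ∉ F ∧ ∀ x ∈ F, (Γ.Adj x z ↔ Γ.neighborSet x ∈ p i)})
    (fun i ↦ Eventually.and (hp i F.finite_toSet.compl_mem_cofinite)
      ((eventually_all_finset F).2 fun x _ ↦ eventually_iff_eventually (p i) (Γ.Adj x)))
    (fun i ↦ (#F + 2) * 2 ^ e i)
  have hadj {i z} (hz : z ∈ B i) : ∀ x ∈ F, (Γ.Adj x z ↔ Γ.neighborSet x ∈ p i) := (hBA i hz).2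
  refine ⟨univ.biUnion B, isLayer_biUnion (fun i ↦ disjoint_right.2 fun z hz ↦ (hBA i hz).1)
    hdisj he hcard fun x hx ↦ ?_, fun z hz ↦ ?_, fun i ↦ ?_⟩
  · rcases mem_union.1 hx with hxF | hxB
    · exact ⟨univ.filter (Γ.neighborSet x ∈ p ·), fun i z hz _ ↦ by simpa using hadj hz x hxF⟩
    · obtain ⟨j, -, hj⟩ := mem_biUnion.1 hxB
      exact ⟨univ.filter (E j), fun i z hz hzx ↦ by simpa using hE j i x hj z hz hzx.symm⟩
  · obtain ⟨i, -, hi⟩ := mem_biUnion.1 hz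
    exact ⟨i, hadj hi⟩
  · obtain ⟨z, hz⟩ : (B i).Nonempty := card_pos.1 (by rw [hcard]; positivity)
    exact ⟨z, mem_biUnion.2 ⟨i, mem_univ i, hz⟩, hadj hz⟩

end Layers

section Automorphisms

variable {X : Type*} {Γ : SimpleGraph X}

theorem degreeIn_apply {V : Finset X} (f : Γ.comap ((↑) : V → X) ≃g Γ.comap ((↑) : V → X))
    (x : V) : degreeIn Γ V (f x) = degreeIn Γ V x := by
  classical
  have hf (z : V) : Γ.Adj (f x) (f z) ↔ Γ.Adj x z := f.map_adj_iff
  rw [degreeIn, degreeIn, card_filter, card_filter, ← sum_coe_sort V, ← sum_coe_sort V,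
    ← f.toEquiv.sum_comp]
  exact sum_congr rfl fun z _ ↦ if_congr (hf z) rfl rfl

theorem twinsOn_apply {V : Finset X} (f : Γ.comap ((↑) : V → X) ≃g Γ.comap ((↑) : V → X))
    {S L : Finset X} (hSV : S ⊆ V) (hS : ∀ y : V, ↑y ∈ S → TwinsOn Γ L y (f y)) {x : V}
    (hx : ↑(f x) ∈ L) : TwinsOn Γ S x (f x) := by
  intro y hy hyx hyfx
  lift y to V using hSV hy
  have hfy : (f x : X) ≠ f y := fun h ↦ hyx (congrArg _ (f.injective (Subtype.ext h)).symm)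
  calc Γ.Adj x y ↔ Γ.Adj (f y) (f x) := by rw [Γ.adj_comm]; exact f.map_adj_iff.symm
    _ ↔ Γ.Adj y (f x) := (hS y hy (f x) hx hyfx.symm hfy).symm
    _ ↔ Γ.Adj (f x) y := Γ.adj_comm _ _

theorem apply_eq_self_of_isLayer [DecidableEq X] {U L₁ L₂ : Finset X} (h₁ : IsLayer Γ U L₁)
    (h₂ : IsLayer Γ (U ∪ L₁) L₂) (hU : ∀ u ∈ U, ∀ v ∈ U, TwinsOn Γ L₁ u v → u = v)
    (hL₁ : ∀ u ∈ U, ∀ a ∈ L₁, TwinsOn Γ U u a → ¬TwinsOn Γ L₂ u a)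
    (hL₂ : ∀ u ∈ U, ∀ z ∈ L₂, ¬TwinsOn Γ (U ∪ L₁) u z)
    (f : Γ.comap ((↑) : ↥(U ∪ L₁ ∪ L₂) → X) ≃g Γ.comap ((↑) : ↥(U ∪ L₁ ∪ L₂) → X))
    (u : ↥(U ∪ L₁ ∪ L₂)) (hu : ↑u ∈ U) : f u = u := by
  have htwin₂ (x : ↥(U ∪ L₁ ∪ L₂)) : TwinsOn Γ L₂ x (f x) :=
    h₂.twinsOn x.2 (f x).2 (degreeIn_apply f x).symm
  have hinner (x : ↥(U ∪ L₁ ∪ L₂)) (hx : ↑x ∈ U) : ↑(f x) ∈ U ∪ L₁ := by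
    refine (mem_union.1 (f x).2).resolve_right fun hfx ↦ hL₂ x hx _ hfx ?_
    exact twinsOn_apply f subset_union_left (fun y _ ↦ htwin₂ y) hfx
  have htwin₁ (x : ↥(U ∪ L₁ ∪ L₂)) (hx : ↑x ∈ U) : TwinsOn Γ L₁ x (f x) := by
    have hxF : ↑x ∈ U ∪ L₁ := mem_union_left _ hx
    have houter : degreeIn Γ L₂ x = degreeIn Γ L₂ (f x) := degreeIn_congr fun z hz ↦
      htwin₂ x z hz (disjoint_right.1 h₂.disjoint hz <| · ▸ hxF)
        (disjoint_right.1 h₂.disjoint hz <| · ▸ hinner x hx)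
    have hdeg := degreeIn_apply f x
    rw [degreeIn_union h₂.disjoint, degreeIn_union h₂.disjoint, houter] at hdeg
    exact h₁.twinsOn hxF (hinner x hx) (Nat.add_right_cancel hdeg).symm
  rcases mem_union.1 (hinner u hu) with hfu | hfu
  · exact Subtype.ext (hU u hu _ hfu (htwin₁ u hu)).symm
  · refine absurd (htwin₂ u) (hL₁ u hu _ hfu ?_)
    exact twinsOn_apply f (subset_union_left.trans subset_union_left) htwin₁ hfu

end Automorphisms

section Separation

variable {X : Type*} {Γ : SimpleGraph X}
  (hdiff : ∀ x y : X, x ≠ y → (Γ.neighborSet x \ Γ.neighborSet y).Infinite)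
include hdiff

theorem exists_isLayer_separating [DecidableEq X] (U : Finset X) :
    ∃ L, IsLayer Γ U L ∧ ∀ u ∈ U, ∀ v ∈ U, TwinsOn Γ L u v → u = v := by
  choose p hp hmem hnotMem using fun i : {i : U × U // i.1 ≠ i.2} ↦
    exists_ultrafilter_le_cofinite_of_infinite_sdiff (hdiff _ _ (Subtype.coe_ne_coe.2 i.2))
  obtain ⟨L, hL, -, hpL⟩ := exists_isLayer Γ U hp
  refine ⟨L, hL, fun u hu v hv huv ↦ by_contra fun hne ↦ ?_⟩
  let i : {i : U × U // i.1 ≠ i.2} := ⟨(⟨u, hu⟩, ⟨v, hv⟩), Subtype.coe_ne_coe.1 hne⟩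
  obtain ⟨z, hz, hzU⟩ := hpL i
  have hzU' : z ∉ U := disjoint_right.1 hL.disjoint hz
  have hadj := huv z hz (ne_of_mem_of_not_mem hu hzU').symm (ne_of_mem_of_not_mem hv hzU').symm
  rw [hzU u hu, hzU v hv] at hadj
  exact hnotMem i (hadj.1 (hmem i))

theorem exists_ultrafilter_mem_iff_adj {u a : X} (hua : u ≠ a) :
    ∃ q : Ultrafilter X, (q : Filter X) ≤ cofinite ∧
      (Γ.neighborSet u ∈ q ↔ Γ.Adj u a) ∧ (Γ.neighborSet a ∈ q ↔ ¬Γ.Adj u a) := by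
  by_cases h : Γ.Adj u a
  · obtain ⟨q, hq, hu, ha⟩ := exists_ultrafilter_le_cofinite_of_infinite_sdiff (hdiff u a hua)
    exact ⟨q, hq, iff_of_true hu h, iff_of_false ha (not_not.2 h)⟩
  · obtain ⟨q, hq, ha, hu⟩ := exists_ultrafilter_le_cofinite_of_infinite_sdiff (hdiff a u hua.symm)
    exact ⟨q, hq, iff_of_false hu h, iff_of_true ha h⟩

theorem exists_isLayer_separating_twins [DecidableEq X] {U L : Finset X} (hUL : Disjoint U L) :
    ∃ L', IsLayer Γ (U ∪ L) L' ∧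
      (∀ u ∈ U, ∀ a ∈ L, TwinsOn Γ U u a → ¬TwinsOn Γ L' u a) ∧
      ∀ u ∈ U, ∀ z ∈ L', ¬TwinsOn Γ (U ∪ L) u z := by
  let ι := {i : U × L // TwinsOn Γ U i.1 i.2}
  have hne (i : ι) : (i.1.1 : X) ≠ i.1.2 := hUL.forall_ne_finset i.1.1.2 i.1.2.2
  choose q hq hqu hqa using fun i : ι ↦ exists_ultrafilter_mem_iff_adj hdiff (hne i)
  obtain ⟨L', hL', hLq, hqL⟩ := exists_isLayer Γ (U ∪ L) hq
  have hne' {x z : X} (hx : x ∈ U ∪ L) (hz : z ∈ L') : x ≠ z :=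
    hL'.disjoint.forall_ne_finset hx hz
  have hsep {i : ι} {z : X} (hz : ∀ x ∈ U ∪ L, (Γ.Adj x z ↔ Γ.neighborSet x ∈ q i)) :
      (Γ.Adj i.1.1 z ↔ Γ.Adj i.1.1 i.1.2) ∧ (Γ.Adj i.1.2 z ↔ ¬Γ.Adj i.1.1 i.1.2) :=
    ⟨(hz _ (mem_union_left _ i.1.1.2)).trans (hqu i),
      (hz _ (mem_union_right _ i.1.2.2)).trans (hqa i)⟩
  refine ⟨L', hL', fun u hu a ha htwin htwin' ↦ ?_, fun u hu z hz htwin ↦ ?_⟩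
  · obtain ⟨z, hz, hzF⟩ := hqL ⟨(⟨u, hu⟩, ⟨a, ha⟩), htwin⟩
    have hadj := htwin' z hz (hne' (mem_union_left _ hu) hz).symm
      (hne' (mem_union_right _ ha) hz).symm
    rw [(hsep hzF).1, (hsep hzF).2] at hadj
    exact iff_not_self hadj
  · obtain ⟨i, hi⟩ := hLq z hz
    obtain ⟨⟨⟨v, hv⟩, ⟨a, ha⟩⟩, hva⟩ := i
    obtain ⟨hvz, haz⟩ := hsep hi
    have hua : u ≠ a := hUL.forall_ne_finset hu ha
    have hadj_a : Γ.Adj u a ↔ ¬Γ.Adj v a := by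
      rw [htwin a (mem_union_right _ ha) hua.symm (hne' (mem_union_right _ ha) hz),
        Γ.adj_comm, haz]
    -- For `u ≠ v`, the vertex `z`, hence its twin `u`, separates the twins `v` and `a`.
    by_cases huv : u = v
    · subst huv
      exact iff_not_self hadj_a
    · have hadj_v : Γ.Adj u v ↔ Γ.Adj v a := by
        rw [htwin v (mem_union_left _ hv) (Ne.symm huv) (hne' (mem_union_left _ hv) hz),
          Γ.adj_comm, hvz]
      have hva_u : Γ.Adj v u ↔ Γ.Adj a u := hva u hu huv hua
      rw [Γ.adj_comm v, Γ.adj_comm a, hadj_v, hadj_a] at hva_u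
      exact iff_not_self hva_u

end Separation

/-- an infinite graph in which Γ(x) \ Γ(y) and Γ(y) \ Γ(x) are infinite for all
    distinct x, y is locally rigid. -/
theorem stmt11 {X : Type*} [Infinite X] (Γ : SimpleGraph X)
    (hdiff : ∀ x y : X, x ≠ y →
      (Γ.neighborSet x \ Γ.neighborSet y).Infinite ∧
      (Γ.neighborSet y \ Γ.neighborSet x).Infinite) :
    ∀ U : Finset X, ∃ V : Finset X, U ⊆ V ∧
      ∀ f : {x // x ∈ V} ≃ {x // x ∈ V},
        (∀ a b : {x // x ∈ V}, Γ.Adj (a : X) (b : X) ↔ Γ.Adj (f a : X) (f b : X)) →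
        ∀ a : {x // x ∈ V}, (a : X) ∈ U → f a = a := by
  classical
  intro U
  have hdiff' (x y : X) (h : x ≠ y) : (Γ.neighborSet x \ Γ.neighborSet y).Infinite :=
    (hdiff x y h).1
  obtain ⟨L₁, h₁, hU⟩ := exists_isLayer_separating hdiff' U
  obtain ⟨L₂, h₂, hL₁, hL₂⟩ := exists_isLayer_separating_twins hdiff' h₁.disjoint
  exact ⟨U ∪ L₁ ∪ L₂, subset_union_left.trans subset_union_left, fun f hf ↦
    apply_eq_self_of_isLayer h₁ h₂ hU hL₁ hL₂ ⟨f, (hf _ _).symm⟩⟩
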